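/- (Quantitative form of Theorem 3.) Let X_1,…,X_n, Y_1,…,Y_n (n ≥ 2) be random variables with values in [0,1]^d such that the couples (X_1,Y_1),…,(X_n,Y_n) are pairwise independent and, for every k = 1,…,n, X_k and Y_k have the same distribution, with empirical measures μ_n = (1/n)Σ_{k=1}^n δ_{X_k} and ν_n = (1/n)Σ_{k=1}^n δ_{Y_k}. Then E(W₁(μ_n,ν_n)) ≤ 2/√n if d = 1; E(W₁(μ_n,ν_n)) ≤ 10·√((1 + log n)/n) if d = 2; and E(W₁(μ_n,ν_n)) ≤ 16√d / n^{1/d} if d ≥ 3. -/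

import Mathlib

open MeasureTheory ProbabilityTheory Real ENNReal

noncomputable section

/-- Euclidean distance on `Fin d → ℝ`. -/
def euclidDist {d : ℕ} (x y : Fin d → ℝ) : ℝ := Real.sqrt (∑ i, (x i - y i) ^ 2)

/-- `γ` is a coupling of `μ` and `ν`. -/
def IsCoupling {α : Type*} [MeasurableSpace α]
    (γ : Measure (α × α)) (μ ν : Measure α) : Prop :=
  γ.map Prod.fst = μ ∧ γ.map Prod.snd = ν

/-- Optimal transport cost for a cost function `c`. -/
def transportCost {α : Type*} [MeasurableSpace α] (c : α → α → ℝ)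
    (μ ν : Measure α) : ℝ≥0∞ :=
  ⨅ (γ : Measure (α × α)) (_ : IsCoupling γ μ ν),
    ∫⁻ p, ENNReal.ofReal (c p.1 p.2) ∂γ

/-- Euclidean Kantorovich distance `W₁`. -/
def W1 {d : ℕ} (μ ν : Measure (Fin d → ℝ)) : ℝ≥0∞ := transportCost euclidDist μ ν

/-- The empirical measure `(1/n) Σ_k δ_{X_k(ω)}`. -/
def empMeasure {d n : ℕ} {Ω : Type*} [MeasurableSpace Ω]
    (X : Fin n → Ω → (Fin d → ℝ)) (ω : Ω) : Measure (Fin d → ℝ) :=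
  (n : ℝ≥0∞)⁻¹ • ∑ k, Measure.dirac (X k ω)

lemma euclidDist_eq {d : ℕ} (x y : Fin d → ℝ) :
    euclidDist x y = dist (WithLp.toLp 2 x) (WithLp.toLp 2 y) := by
  rw [EuclideanSpace.dist_eq]
  simp [euclidDist, Real.dist_eq, sq_abs]

lemma euclidDist_triangle {d : ℕ} (x y z : Fin d → ℝ) :
    euclidDist x z ≤ euclidDist x y + euclidDist y z := by
  simp only [euclidDist_eq]; exact dist_triangle _ _ _

lemma euclidDist_self {d : ℕ} (x : Fin d → ℝ) : euclidDist x x = 0 := by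
  simp [euclidDist_eq]

lemma euclidDist_comm {d : ℕ} (x y : Fin d → ℝ) : euclidDist x y = euclidDist y x := by
  simp only [euclidDist_eq]; exact dist_comm _ _

lemma euclidDist_le {d : ℕ} (x y : Fin d → ℝ) (δ : ℝ) (hδ : 0 ≤ δ)
    (h : ∀ i, |x i - y i| ≤ δ) : euclidDist x y ≤ Real.sqrt d * δ := by
  unfold euclidDist
  have : ∑ i, (x i - y i) ^ 2 ≤ d * δ ^ 2 := by
    calc ∑ i, (x i - y i) ^ 2 ≤ ∑ i : Fin d, δ ^ 2 :=
          Finset.sum_le_sum fun i _ => sq_le_sq.2 (by rw [abs_of_nonneg hδ]; exact h i)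
      _ = _ := by simp
  calc _ ≤ Real.sqrt (d * δ ^ 2) := Real.sqrt_le_sqrt this
    _ = _ := by rw [Real.sqrt_mul (by positivity), Real.sqrt_sq hδ]

/-- 1-Lipschitz for the Euclidean distance. -/
def Lip1 {d : ℕ} (f : (Fin d → ℝ) → ℝ) : Prop := ∀ x y, f x - f y ≤ euclidDist x y

lemma exists_plan {d n : ℕ} (hn : 0 < n) (x y : Fin n → (Fin d → ℝ)) (C : ℝ)
    (h : ∀ f, Lip1 f → (1 / n : ℝ) * ∑ k, (f (x k) - f (y k)) ≤ C) :
    ∃ q : Fin n × Fin n → ℝ, (∀ p, 0 ≤ q p) ∧ (∀ i, ∑ j, q (i, j) = 1 / n) ∧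
      (∀ j, ∑ i, q (i, j) = 1 / n) ∧ ∑ i, ∑ j, q (i, j) * euclidDist (x i) (y j) ≤ C := by
  classical
  have : Nonempty (Fin n) := ⟨⟨0, hn⟩⟩
  have hn' : (n : ℝ) ≠ 0 := by positivity
  let L : (Fin n × Fin n → ℝ) →ₗ[ℝ] ((Fin n → ℝ) × (Fin n → ℝ) × ℝ) :=
    { toFun := fun q => (fun i => ∑ j, q (i, j), fun j => ∑ i, q (i, j),
        ∑ i, ∑ j, q (i, j) * euclidDist (x i) (y j))
      map_add' := by
        intro a b
        ext <;> simp [Finset.sum_add_distrib, add_mul]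
      map_smul' := by
        intro a b
        ext <;> simp [Finset.mul_sum, mul_assoc] }
  have hLc : Continuous L := L.continuous_of_finiteDimensional
  let K := L '' stdSimplex ℝ (Fin n × Fin n)
  have hKc : IsCompact K := (isCompact_stdSimplex ℝ _).image hLc
  have hKv : Convex ℝ K := (convex_stdSimplex ℝ _).linear_image L
  let u : Fin n → ℝ := fun _ => 1 / n
  let R : Set ((Fin n → ℝ) × (Fin n → ℝ) × ℝ) := {u} ×ˢ ({u} ×ˢ Set.Iic C)
  have hRv : Convex ℝ R := (convex_singleton _).prod ((convex_singleton _).prod (convex_Iic C))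
  have hRc : IsClosed R := isClosed_singleton.prod (isClosed_singleton.prod isClosed_Iic)
  by_cases hd : Disjoint R K
  swap
  · obtain ⟨z, hz, q, hq, rfl⟩ := Set.not_disjoint_iff.1 hd
    simp only [R, Set.mem_prod, Set.mem_singleton_iff, Set.mem_Iic] at hz
    refine ⟨q, hq.1, fun i => congrFun hz.1 i, fun j => congrFun hz.2.1 j, hz.2.2⟩
  exfalso
  obtain ⟨F, r, s, h1, hrs, h2⟩ := geometric_hahn_banach_closed_compact hRv hRc hKv hKc hd
  let φ : Fin n → ℝ := fun i => F (Pi.single i 1, 0, 0)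
  let ψ : Fin n → ℝ := fun j => F (0, Pi.single j 1, 0)
  let t : ℝ := F (0, 0, 1)
  have hFt : ∀ c : ℝ, F (0, 0, c) = c * t := by
    intro c
    have : ((0 : Fin n → ℝ), (0 : Fin n → ℝ), c) = c • (0, 0, (1:ℝ)) := by simp
    rw [this, map_smul]; rfl
  have hij : ∀ i j, s < φ i + ψ j + euclidDist (x i) (y j) * t := by
    intro i j
    have h3 := h2 (Pi.single i 1, Pi.single j 1, euclidDist (x i) (y j))
      ⟨Pi.single (i, j) 1, single_mem_stdSimplex ℝ (i, j), by
        ext k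
        · simp only [L, LinearMap.coe_mk, AddHom.coe_mk, Pi.single_apply, Prod.mk.injEq]
          by_cases hk : k = i <;> simp [hk]
        · simp only [L, LinearMap.coe_mk, AddHom.coe_mk, Pi.single_apply, Prod.mk.injEq]
          by_cases hk : k = j <;> simp [hk]
        · simp only [L, LinearMap.coe_mk, AddHom.coe_mk, Pi.single_apply, Prod.mk.injEq]
          simp [ite_and]⟩
    have : ((Pi.single i 1, Pi.single j 1, euclidDist (x i) (y j)) : (Fin n → ℝ) × (Fin n → ℝ) × ℝ)
      = (Pi.single i 1, 0, 0) + (0, Pi.single j 1, 0) + (0, 0, euclidDist (x i) (y j)) := by simp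
    rw [this, map_add, map_add, hFt] at h3
    exact h3
  have hu1 : F (u, 0, 0) = (1 / n) * ∑ i, φ i := by
    have : ((u, 0, 0) : (Fin n → ℝ) × (Fin n → ℝ) × ℝ) =
        (1 / n : ℝ) • ∑ i, ((Pi.single i 1, 0, 0) : (Fin n → ℝ) × (Fin n → ℝ) × ℝ) := by
      ext k
      · simp [u, Prod.fst_sum, Pi.single_apply]
      · simp [Prod.snd_sum, Prod.fst_sum]
      · simp [Prod.snd_sum]
    rw [this, map_smul, map_sum]; rfl
  have hu2 : F (0, u, 0) = (1 / n) * ∑ i, ψ i := by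
    have : ((0, u, 0) : (Fin n → ℝ) × (Fin n → ℝ) × ℝ) =
        (1 / n : ℝ) • ∑ i, ((0, Pi.single i 1, 0) : (Fin n → ℝ) × (Fin n → ℝ) × ℝ) := by
      ext k
      · simp [Prod.fst_sum]
      · simp [u, Prod.snd_sum, Prod.fst_sum, Pi.single_apply]
      · simp [Prod.snd_sum]
    rw [this, map_smul, map_sum]; rfl
  have hR : ∀ c ≤ C, (1 / n) * ∑ i, φ i + (1 / n) * ∑ i, ψ i + c * t < r := by
    intro c hc
    have h3 := h1 (u, u, c) ⟨rfl, rfl, hc⟩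
    have : ((u, u, c) : (Fin n → ℝ) × (Fin n → ℝ) × ℝ)
      = (u, 0, 0) + (0, u, 0) + (0, 0, c) := by simp
    rw [this, map_add, map_add, hFt, hu1, hu2] at h3
    exact h3
  have hsum : ∀ i : Fin n, (1 / n : ℝ) * ∑ i : Fin n, s = s := by
    intro i; simp; field_simp
  -- diagonal average
  have hdiag : s ≤ (1 / n) * ∑ i, φ i + (1 / n) * ∑ i, ψ i
      + (1 / n * ∑ i, euclidDist (x i) (y i)) * t := by
    have := Finset.sum_le_sum (s := Finset.univ) fun i (_ : i ∈ Finset.univ) => (hij i i).le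
    rw [Finset.sum_add_distrib, Finset.sum_add_distrib, ← Finset.sum_mul] at this
    have h5 := mul_le_mul_of_nonneg_left this (by positivity : (0:ℝ) ≤ 1 / n)
    rw [hsum ⟨0, hn⟩] at h5
    linarith
  have ht : 0 < t := by
    by_contra hcon
    push Not at hcon
    have h6 := hR (min C (1 / n * ∑ i, euclidDist (x i) (y i))) (min_le_left _ _)
    have h7 := mul_le_mul_of_nonpos_right
      (min_le_right C (1 / n * ∑ i, euclidDist (x i) (y i))) hcon
    linarith
  -- potential
  let f : (Fin d → ℝ) → ℝ := fun z =>
    Finset.univ.inf' Finset.univ_nonempty fun j => euclidDist z (y j) + ψ j / t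
  have hf : Lip1 f := by
    intro z w
    obtain ⟨j, -, hj⟩ := Finset.exists_mem_eq_inf' (Finset.univ_nonempty (α := Fin n))
      fun j => euclidDist w (y j) + ψ j / t
    have h8 : f z ≤ euclidDist z (y j) + ψ j / t := Finset.inf'_le _ (Finset.mem_univ j)
    have h9 : f w = euclidDist w (y j) + ψ j / t := hj
    have := euclidDist_triangle z w (y j)
    linarith
  have hfx : ∀ i, (s - φ i) / t ≤ f (x i) := by
    intro i
    refine Finset.le_inf' _ _ fun j _ => ?_
    rw [div_le_iff₀ ht, add_mul, div_mul_cancel₀ _ ht.ne']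
    linarith [hij i j]
  have hfy : ∀ j, f (y j) ≤ ψ j / t := by
    intro j
    have h8 : f (y j) ≤ euclidDist (y j) (y j) + ψ j / t := Finset.inf'_le _ (Finset.mem_univ j)
    rwa [euclidDist_self, zero_add] at h8
  have hfin := h f hf
  have h10 : ∑ k, ((s - φ k) / t - ψ k / t) ≤ ∑ k, (f (x k) - f (y k)) :=
    Finset.sum_le_sum fun k _ => sub_le_sub (hfx k) (hfy k)
  have h11 : ∑ k, ((s - φ k) / t - ψ k / t) = (∑ k : Fin n, s - ∑ k, φ k - ∑ k, ψ k) / t := by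
    rw [Finset.sum_sub_distrib, ← Finset.sum_div, ← Finset.sum_div, Finset.sum_sub_distrib]; ring
  rw [h11] at h10
  have h12 := (mul_le_mul_of_nonneg_left h10 (by positivity : (0:ℝ) ≤ 1 / n)).trans hfin
  rw [← mul_div_assoc, div_le_iff₀ ht, mul_sub, mul_sub, hsum ⟨0, hn⟩] at h12
  linarith [hR C le_rfl]

lemma W1_le {d n : ℕ} (hn : 0 < n) {Ω : Type*} [MeasurableSpace Ω]
    (X Y : Fin n → Ω → (Fin d → ℝ)) (ω : Ω) (C : ℝ)
    (h : ∀ f, Lip1 f → (1 / n : ℝ) * ∑ k, (f (X k ω) - f (Y k ω)) ≤ C) :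
    W1 (empMeasure X ω) (empMeasure Y ω) ≤ ENNReal.ofReal C := by
  classical
  obtain ⟨q, h0, hr, hc, hcost⟩ := exists_plan hn (fun k => X k ω) (fun k => Y k ω) C h
  have hinv : ENNReal.ofReal (1 / n) = (n : ℝ≥0∞)⁻¹ := by
    rw [one_div, ENNReal.ofReal_inv_of_pos (by exact_mod_cast hn), ENNReal.ofReal_natCast]
  let γ : Measure ((Fin d → ℝ) × (Fin d → ℝ)) :=
    ∑ i, ∑ j, ENNReal.ofReal (q (i, j)) • Measure.dirac (X i ω, Y j ω)
  have hγ : IsCoupling γ (empMeasure X ω) (empMeasure Y ω) := by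
    constructor
    · ext s hs
      rw [Measure.map_apply measurable_fst hs]
      simp only [γ, empMeasure, Measure.smul_apply, Measure.finsetSum_apply,
        Measure.dirac_apply' _ hs, Measure.dirac_apply' _ (measurable_fst hs), smul_eq_mul]
      rw [Finset.mul_sum]
      refine Finset.sum_congr rfl fun i _ => ?_
      have : ∀ j, (Prod.fst ⁻¹' s).indicator (1 : (Fin d → ℝ) × (Fin d → ℝ) → ℝ≥0∞) (X i ω, Y j ω)
        = s.indicator 1 (X i ω) := fun j => rfl
      simp_rw [this]
      rw [← Finset.sum_mul, ← ENNReal.ofReal_sum_of_nonneg (fun _ _ => h0 _), hr, hinv]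
    · ext s hs
      rw [Measure.map_apply measurable_snd hs]
      simp only [γ, empMeasure, Measure.smul_apply, Measure.finsetSum_apply,
        Measure.dirac_apply' _ hs, Measure.dirac_apply' _ (measurable_snd hs), smul_eq_mul]
      rw [Finset.mul_sum, Finset.sum_comm]
      refine Finset.sum_congr rfl fun j _ => ?_
      have : ∀ i, (Prod.snd ⁻¹' s).indicator (1 : (Fin d → ℝ) × (Fin d → ℝ) → ℝ≥0∞) (X i ω, Y j ω)
        = s.indicator 1 (Y j ω) := fun i => rfl
      simp_rw [this]
      rw [← Finset.sum_mul, ← ENNReal.ofReal_sum_of_nonneg (fun _ _ => h0 _), hc, hinv]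
  refine (iInf₂_le γ hγ).trans ?_
  simp only [γ, lintegral_finsetSum_measure, lintegral_smul_measure, lintegral_dirac, smul_eq_mul]
  have hnn : ∀ i j, 0 ≤ q (i, j) * euclidDist (X i ω) (Y j ω) := fun i j =>
    mul_nonneg (h0 _) (Real.sqrt_nonneg _)
  simp_rw [← ENNReal.ofReal_mul (h0 _)]
  simp_rw [← ENNReal.ofReal_sum_of_nonneg (fun _ _ => hnn _ _)]
  rw [← ENNReal.ofReal_sum_of_nonneg (fun _ _ => Finset.sum_nonneg fun _ _ => hnn _ _)]
  exact ENNReal.ofReal_le_ofReal hcost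

lemma second_moment {d n : ℕ} (hn : 0 < n)
    {Ω : Type*} [MeasurableSpace Ω] (P : Measure Ω) [IsProbabilityMeasure P]
    (X Y : Fin n → Ω → (Fin d → ℝ))
    (hXmeas : ∀ k, Measurable (X k)) (hYmeas : ∀ k, Measurable (Y k))
    (hpair : ∀ j k, j ≠ k →
      IndepFun (fun ω => (X j ω, Y j ω)) (fun ω => (X k ω, Y k ω)) P)
    (hid : ∀ k, P.map (X k) = P.map (Y k))
    (φ : (Fin d → ℝ) → ℝ) (hφ : Measurable φ) (B : ℝ) (hB : ∀ x, |φ x| ≤ B) :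
    Integrable (fun ω => (1 / n : ℝ) * ∑ k, (φ (X k ω) - φ (Y k ω))) P ∧
    (∀ k, Integrable (fun ω => (φ (X k ω) - φ (Y k ω)) ^ 2) P) ∧
    (∫ ω, |(1 / n : ℝ) * ∑ k, (φ (X k ω) - φ (Y k ω))| ∂P) ^ 2 ≤
      (1 / n : ℝ) ^ 2 * ∑ k, ∫ ω, (φ (X k ω) - φ (Y k ω)) ^ 2 ∂P := by
  let D : Fin n → Ω → ℝ := fun k ω => φ (X k ω) - φ (Y k ω)
  have hDm : ∀ k, Measurable (D k) := fun k =>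
    (hφ.comp (hXmeas k)).sub (hφ.comp (hYmeas k))
  have hDb : ∀ k ω, |D k ω| ≤ B + B := fun k ω =>
    (abs_sub _ _).trans (add_le_add (hB _) (hB _))
  have hDL : ∀ k, MemLp (D k) 2 P := fun k =>
    MemLp.of_bound (hDm k).aestronglyMeasurable (B + B) (Filter.Eventually.of_forall (hDb k))
  have hXi : ∀ k, Integrable (fun ω => φ (X k ω)) P := fun k =>
    Integrable.of_bound (hφ.comp (hXmeas k)).aestronglyMeasurable B
      (Filter.Eventually.of_forall fun ω => hB _)
  have hYi : ∀ k, Integrable (fun ω => φ (Y k ω)) P := fun k =>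
    Integrable.of_bound (hφ.comp (hYmeas k)).aestronglyMeasurable B
      (Filter.Eventually.of_forall fun ω => hB _)
  have hmean : ∀ k, ∫ ω, D k ω ∂P = 0 := by
    intro k
    simp only [D]
    rw [integral_sub (hXi k) (hYi k)]
    rw [← integral_map (hXmeas k).aemeasurable hφ.aestronglyMeasurable,
      ← integral_map (hYmeas k).aemeasurable hφ.aestronglyMeasurable, hid k, sub_self]
  have hind : Set.Pairwise (↑(Finset.univ : Finset (Fin n))) fun i j => IndepFun (D i) (D j) P := by
    intro i _ j _ hij
    have hm : Measurable fun p : (Fin d → ℝ) × (Fin d → ℝ) => φ p.1 - φ p.2 :=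
      (hφ.comp measurable_fst).sub (hφ.comp measurable_snd)
    exact (hpair i j hij).comp hm hm
  have hvar := IndepFun.variance_sum (fun i _ => hDL i) hind
  have hSL : MemLp (∑ k, D k) 2 P := memLp_finsetSum' _ fun i _ => hDL i
  have hSmean : ∫ ω, (∑ k, D k) ω ∂P = 0 := by
    simp only [Finset.sum_apply]
    rw [integral_finsetSum _ fun i _ => (hDL i).integrable (by norm_num)]
    simp [hmean]
  have hvk : ∀ k, variance (D k) P = ∫ ω, D k ω ^ 2 ∂P := fun k =>
    variance_of_integral_eq_zero (hDm k).aemeasurable (hmean k)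
  rw [variance_of_integral_eq_zero hSL.aemeasurable hSmean] at hvar
  simp_rw [hvk] at hvar
  let S : Ω → ℝ := fun ω => (1 / n : ℝ) * ∑ k, D k ω
  have hS : MemLp S 2 P := by
    have := hSL.const_mul (1 / n : ℝ)
    simpa [S, Finset.sum_apply] using this
  have hS2 : ∫ ω, S ω ^ 2 ∂P = (1 / n : ℝ) ^ 2 * ∑ k, ∫ ω, D k ω ^ 2 ∂P := by
    rw [← hvar, ← integral_const_mul]
    refine integral_congr_ae (Filter.Eventually.of_forall fun ω => ?_)
    simp only [S, Finset.sum_apply, mul_pow]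
  refine ⟨hS.integrable (by norm_num), fun k => (hDL k).integrable_sq, ?_⟩
  rw [← hS2]
  have h0 := variance_nonneg (|S|) P
  rw [variance_eq_sub hS.abs] at h0
  simp only [Pi.pow_apply, Pi.abs_apply, sq_abs] at h0
  linarith

lemma expect_bound {d n : ℕ} (hn : 0 < n)
    {Ω : Type*} [MeasurableSpace Ω] (P : Measure Ω) [IsProbabilityMeasure P]
    (X Y : Fin n → Ω → (Fin d → ℝ))
    (hXmeas : ∀ k, Measurable (X k)) (hYmeas : ∀ k, Measurable (Y k))
    (hpair : ∀ j k, j ≠ k →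
      IndepFun (fun ω => (X j ω, Y j ω)) (fun ω => (X k ω, Y k ω)) P)
    (hid : ∀ k, P.map (X k) = P.map (Y k))
    (I : Type) [Fintype I] (φ : I → (Fin d → ℝ) → ℝ) (hφ : ∀ i, Measurable (φ i))
    (B : ℝ) (hB : ∀ i x, |φ i x| ≤ B) (M : ℝ)
    (hM : ∀ x y, ∑ i, (φ i x - φ i y) ^ 2 ≤ M) :
    Integrable (fun ω => ∑ i, |(1 / n : ℝ) * ∑ k, (φ i (X k ω) - φ i (Y k ω))|) P ∧
    ∫ ω, ∑ i, |(1 / n : ℝ) * ∑ k, (φ i (X k ω) - φ i (Y k ω))| ∂P ≤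
      Real.sqrt (Fintype.card I * M / n) := by
  have key := fun i => second_moment hn P X Y hXmeas hYmeas hpair hid (φ i) (hφ i) B (hB i)
  have hint := fun i => (key i).1.abs
  refine ⟨integrable_finsetSum _ fun i _ => hint i, ?_⟩
  rw [integral_finsetSum _ fun i _ => hint i]
  refine Real.le_sqrt_of_sq_le ?_
  have hn' : (0:ℝ) < n := by exact_mod_cast hn
  calc _ ≤ (Fintype.card I : ℝ) * ∑ i, (∫ ω, |(1 / n : ℝ) * ∑ k, (φ i (X k ω) - φ i (Y k ω))| ∂P) ^ 2 :=
        sq_sum_le_card_mul_sum_sq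
    _ ≤ (Fintype.card I : ℝ) *
        ∑ i, (1 / n : ℝ) ^ 2 * ∑ k, ∫ ω, (φ i (X k ω) - φ i (Y k ω)) ^ 2 ∂P := by
        gcongr with i _; exact (key i).2.2
    _ = (Fintype.card I : ℝ) *
        ((1 / n : ℝ) ^ 2 * ∑ k, ∫ ω, ∑ i, (φ i (X k ω) - φ i (Y k ω)) ^ 2 ∂P) := by
        rw [← Finset.mul_sum, Finset.sum_comm]
        congr 3 with k
        rw [integral_finsetSum _ fun i _ => (key i).2.1 k]
    _ ≤ (Fintype.card I : ℝ) * ((1 / n : ℝ) ^ 2 * ∑ k : Fin n, M) := by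
        gcongr with k _
        calc _ ≤ ∫ ω, M ∂P := integral_mono
              (integrable_finsetSum _ fun i _ => (key i).2.1 k) (integrable_const _)
              fun ω => hM _ _
          _ = M := by simp
    _ = _ := by
        simp; field_simp

lemma master {d n : ℕ} (hn : 0 < n)
    {Ω : Type*} [MeasurableSpace Ω] (P : Measure Ω) [IsProbabilityMeasure P]
    (X Y : Fin n → Ω → (Fin d → ℝ))
    (hXmeas : ∀ k, Measurable (X k)) (hYmeas : ∀ k, Measurable (Y k))
    (hXcube : ∀ k ω i, X k ω i ∈ Set.Icc (0 : ℝ) 1)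
    (hYcube : ∀ k ω i, Y k ω i ∈ Set.Icc (0 : ℝ) 1)
    (hpair : ∀ j k, j ≠ k →
      IndepFun (fun ω => (X j ω, Y j ω)) (fun ω => (X k ω, Y k ω)) P)
    (hid : ∀ k, P.map (X k) = P.map (Y k))
    (G : ℕ) (I : ℕ → Type) [∀ g, Fintype (I g)] (φ : ∀ g, I g → (Fin d → ℝ) → ℝ)
    (hφ : ∀ g i, Measurable (φ g i))
    (B : ℕ → ℝ) (hB : ∀ g i x, |φ g i x| ≤ B g) (M : ℕ → ℝ)
    (hM : ∀ g x y, ∑ i, (φ g i x - φ g i y) ^ 2 ≤ M g)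
    (w : ℕ → ℝ) (hw : ∀ g, 0 ≤ w g) (e : ℝ) (he : 0 ≤ e)
    (hf : ∀ f : (Fin d → ℝ) → ℝ, Lip1 f → ∃ c : ∀ g, I g → ℝ, (∀ g i, |c g i| ≤ w g) ∧
      ∀ x y, (∀ i, x i ∈ Set.Icc (0 : ℝ) 1) → (∀ i, y i ∈ Set.Icc (0 : ℝ) 1) →
        f x - f y ≤ e + ∑ g ∈ Finset.range G, ∑ i, c g i * (φ g i x - φ g i y)) :
    ∫⁻ ω, W1 (empMeasure X ω) (empMeasure Y ω) ∂P ≤ ENNReal.ofReal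
      (e + ∑ g ∈ Finset.range G, w g * Real.sqrt (Fintype.card (I g) * M g / n)) := by
  have hn' : (0:ℝ) < n := by exact_mod_cast hn
  have key := fun g => expect_bound hn P X Y hXmeas hYmeas hpair hid (I g) (φ g) (hφ g)
    (B g) (hB g) (M g) (hM g)
  let H : Ω → ℝ := fun ω => e + ∑ g ∈ Finset.range G,
    w g * ∑ i, |(1 / n : ℝ) * ∑ k, (φ g i (X k ω) - φ g i (Y k ω))|
  have hHi' : Integrable (fun ω => ∑ g ∈ Finset.range G,
    w g * ∑ i, |(1 / n : ℝ) * ∑ k, (φ g i (X k ω) - φ g i (Y k ω))|) P :=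
    integrable_finsetSum _ fun g _ => (key g).1.const_mul _
  have hHi : Integrable H P := (integrable_const e).add hHi'
  have hH0 : ∀ ω, 0 ≤ H ω := fun ω => add_nonneg he <| Finset.sum_nonneg fun g _ =>
    mul_nonneg (hw g) (Finset.sum_nonneg fun i _ => abs_nonneg _)
  calc _ ≤ ∫⁻ ω, ENNReal.ofReal (H ω) ∂P := by
        refine lintegral_mono fun ω => W1_le hn X Y ω _ fun f hfl => ?_
        obtain ⟨c, hc, hb⟩ := hf f hfl
        calc (1 / n : ℝ) * ∑ k, (f (X k ω) - f (Y k ω))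
            ≤ (1 / n : ℝ) * ∑ k, (e + ∑ g ∈ Finset.range G, ∑ i,
              c g i * (φ g i (X k ω) - φ g i (Y k ω))) := by
              gcongr with k _
              exact hb _ _ (hXcube k ω) (hYcube k ω)
          _ = e + ∑ g ∈ Finset.range G, ∑ i,
              c g i * ((1 / n : ℝ) * ∑ k, (φ g i (X k ω) - φ g i (Y k ω))) := by
              rw [Finset.sum_add_distrib, Finset.sum_comm, mul_add]
              congr 1
              · simp; field_simp
              · rw [Finset.mul_sum]
                refine Finset.sum_congr rfl fun g _ => ?_
                rw [Finset.sum_comm, Finset.mul_sum]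
                refine Finset.sum_congr rfl fun i _ => ?_
                rw [← Finset.mul_sum]; ring
          _ ≤ H ω := by
              simp only [H]
              gcongr with g _
              rw [Finset.mul_sum]
              refine Finset.sum_le_sum fun i _ => ?_
              refine (le_abs_self _).trans ?_
              rw [abs_mul]
              gcongr
              exact hc g i
    _ = ENNReal.ofReal (∫ ω, H ω ∂P) :=
        (ofReal_integral_eq_lintegral_ofReal hHi (Filter.Eventually.of_forall hH0)).symm
    _ ≤ _ := by
        refine ENNReal.ofReal_le_ofReal ?_
        simp only [H]
        rw [integral_add (integrable_const e) hHi', integral_finsetSum _ fun g _ => (key g).1.const_mul _]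
        simp only [integral_const, probReal_univ, one_smul]
        gcongr with g _
        rw [integral_const_mul]
        exact mul_le_mul_of_nonneg_left (key g).2 (hw g)

/-- Index of the dyadic interval of level `j` containing `t`. -/
def cell (j : ℕ) (t : ℝ) : ℕ := min ⌊2 ^ j * t⌋₊ (2 ^ j - 1)

lemma cell_lt (j : ℕ) (t : ℝ) : cell j t < 2 ^ j := by
  have : 0 < 2 ^ j := by positivity
  unfold cell; omega

lemma cell_half (j : ℕ) (t : ℝ) : cell (j + 1) t / 2 = cell j t := by
  have h : ⌊(2:ℝ) ^ (j + 1) * t⌋₊ / 2 = ⌊(2:ℝ) ^ j * t⌋₊ := by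
    have := Nat.floor_div_natCast ((2:ℝ) ^ (j + 1) * t) 2
    rw [← this]; congr 1; push_cast; ring
  have h2 : 2 ^ (j + 1) = 2 * 2 ^ j := by ring
  have h3 : 0 < 2 ^ j := by positivity
  unfold cell; rw [← h, h2]; omega

lemma measurable_cell (j : ℕ) : Measurable (cell j) := by
  unfold cell
  exact (Nat.measurable_floor.comp (measurable_const_mul _)).min measurable_const

lemma cell_close (j : ℕ) (t : ℝ) (ht : t ∈ Set.Icc (0:ℝ) 1) :
    |t - ((cell j t : ℝ) + 1 / 2) / 2 ^ j| ≤ 1 / 2 / 2 ^ j := by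
  have hp : (0:ℝ) < 2 ^ j := by positivity
  have h0 : 0 ≤ (2:ℝ) ^ j * t := mul_nonneg hp.le ht.1
  have h1 := Nat.floor_le h0
  have h2 := Nat.lt_floor_add_one ((2:ℝ) ^ j * t)
  have h3 : (2:ℝ) ^ j * t ≤ 2 ^ j := by nlinarith [ht.2]
  have hc : ((2 ^ j - 1 : ℕ) : ℝ) = 2 ^ j - 1 := by
    rw [Nat.cast_sub Nat.one_le_two_pow]; push_cast; ring
  have h4 : (cell j t : ℝ) ≤ 2 ^ j * t :=
    (by unfold cell; exact_mod_cast min_le_left _ _ : (cell j t : ℝ) ≤ ⌊(2:ℝ) ^ j * t⌋₊).trans h1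
  have h5 : 2 ^ j * t ≤ cell j t + 1 := by
    unfold cell
    push_cast [hc]
    rcases min_cases ((⌊(2:ℝ) ^ j * t⌋₊ : ℝ)) ((2:ℝ) ^ j - 1) with ⟨h, _⟩ | ⟨h, _⟩ <;> rw [h] <;> linarith
  have : t - ((cell j t : ℝ) + 1 / 2) / 2 ^ j = (2 ^ j * t - cell j t - 1 / 2) / 2 ^ j := by
    field_simp; ring
  rw [this, abs_div, abs_of_pos hp]
  gcongr
  rw [abs_le]; constructor <;> linarith

lemma Lip1.abs_le {d : ℕ} {f : (Fin d → ℝ) → ℝ} (hf : Lip1 f) (x y : Fin d → ℝ) :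
    |f x - f y| ≤ euclidDist x y := by
  rw [_root_.abs_le]; constructor
  · have := hf y x; rw [euclidDist_comm] at this; linarith
  · exact hf x y

/-- Centre of a dyadic cube. -/
def ctr {d : ℕ} (j : ℕ) (q : Fin d → ℕ) : Fin d → ℝ := fun i => ((q i : ℝ) + 1 / 2) / 2 ^ j

lemma dyadic_bound {d n : ℕ} (hn : 0 < n)
    {Ω : Type*} [MeasurableSpace Ω] (P : Measure Ω) [IsProbabilityMeasure P]
    (X Y : Fin n → Ω → (Fin d → ℝ))
    (hXmeas : ∀ k, Measurable (X k)) (hYmeas : ∀ k, Measurable (Y k))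
    (hXcube : ∀ k ω i, X k ω i ∈ Set.Icc (0 : ℝ) 1)
    (hYcube : ∀ k ω i, Y k ω i ∈ Set.Icc (0 : ℝ) 1)
    (hpair : ∀ j k, j ≠ k →
      IndepFun (fun ω => (X j ω, Y j ω)) (fun ω => (X k ω, Y k ω)) P)
    (hid : ∀ k, P.map (X k) = P.map (Y k)) (J : ℕ) :
    ∫⁻ ω, W1 (empMeasure X ω) (empMeasure Y ω) ∂P ≤ ENNReal.ofReal
      (Real.sqrt d / 2 ^ J + ∑ j ∈ Finset.range J,
        Real.sqrt d * (1 / 2 / 2 ^ (j + 1)) * Real.sqrt ((2 ^ (j + 1)) ^ d * 2 / n)) := by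
  classical
  let I : ℕ → Type := fun j => Fin d → Fin (2 ^ (j + 1))
  let cl : ∀ j, (Fin d → ℝ) → I j := fun j x i => ⟨cell (j + 1) (x i), cell_lt _ _⟩
  let φ : ∀ j, I j → (Fin d → ℝ) → ℝ := fun j Q x => if Q = cl j x then 1 else 0
  have hcl : ∀ j, Measurable (cl j) := by
    intro j
    refine measurable_pi_lambda _ fun i => ?_
    have h : Measurable fun x : Fin d → ℝ => cell (j + 1) (x i) :=
      (measurable_cell (j + 1)).comp (measurable_pi_apply i)
    refine measurable_to_countable' fun q => ?_
    have h2 : (fun x => cl j x i) ⁻¹' {q} = (fun x : Fin d → ℝ => cell (j + 1) (x i)) ⁻¹' {(q : ℕ)} := by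
      ext x; simp [cl, Fin.ext_iff]
    rw [h2]; exact h (measurableSet_singleton _)
  have hφs : ∀ j (c : I j → ℝ) x, ∑ Q, c Q * φ j Q x = c (cl j x) := by
    intro j c x
    rw [Finset.sum_eq_single (cl j x)]
    · simp [φ]
    · intro b _ hb; simp [φ, hb]
    · intro h; exact absurd (Finset.mem_univ _) h
  have hsum1 : ∀ j x, ∑ Q, φ j Q x = 1 := by
    intro j x
    simpa using hφs j (fun _ => 1) x
  have key := master hn P X Y hXmeas hYmeas hXcube hYcube hpair hid J I φ
    (fun j Q => (Measurable.of_discrete (f := fun R : I j => if Q = R then (1:ℝ) else 0)).comp (hcl j))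
    (fun _ => 1) (fun j Q x => by simp only [φ]; split_ifs <;> simp)
    (fun _ => 2) (fun j x y => by
      calc ∑ Q, (φ j Q x - φ j Q y) ^ 2 ≤ ∑ Q, (φ j Q x + φ j Q y) := by
            refine Finset.sum_le_sum fun Q _ => ?_
            simp only [φ]; split_ifs <;> norm_num
        _ = 2 := by
            rw [Finset.sum_add_distrib, hsum1, hsum1]; norm_num)
    (fun j => Real.sqrt d * (1 / 2 / 2 ^ (j + 1))) (fun j => by positivity)
    (Real.sqrt d / 2 ^ J) (by positivity) ?_
  · have hcard : ∀ j, (Fintype.card (I j) : ℝ) = (2 ^ (j + 1)) ^ d := by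
      intro j; simp [I]
    simpa only [hcard] using key
  intro f hf
  refine ⟨fun j Q => f (ctr (j + 1) fun i => (Q i : ℕ)) - f (ctr j fun i => (Q i : ℕ) / 2), ?_, ?_⟩
  · intro j Q
    refine (hf.abs_le _ _).trans (euclidDist_le _ _ _ (by positivity) fun i => ?_)
    simp only [ctr]
    generalize (Q i : ℕ) = q
    have hq : (q : ℝ) = 2 * (q / 2 : ℕ) + (q % 2 : ℕ) := by
      exact_mod_cast (Nat.div_add_mod q 2).symm
    have hp : (0:ℝ) < 2 ^ j := by positivity
    have : ((q : ℝ) + 1 / 2) / 2 ^ (j + 1) - (((q / 2 : ℕ) : ℝ) + 1 / 2) / 2 ^ j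
        = ((q % 2 : ℕ) - 1 / 2) / 2 ^ (j + 1) := by
      rw [hq, pow_succ]; field_simp; ring_nf
    rw [this, abs_div, abs_of_pos (by positivity : (0:ℝ) < 2 ^ (j + 1))]
    gcongr
    rcases Nat.mod_two_eq_zero_or_one q with h | h <;> rw [h] <;> norm_num [abs_le]
  · intro x y hx hy
    let F : ℕ → (Fin d → ℝ) → ℝ := fun j x => f (ctr j fun i => cell j (x i))
    have hlev : ∀ j x, ∑ Q, (f (ctr (j + 1) fun i => (Q i : ℕ)) - f (ctr j fun i => (Q i : ℕ) / 2))
        * φ j Q x = F (j + 1) x - F j x := by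
      intro j x
      rw [hφs j (fun Q => f (ctr (j + 1) fun i => (Q i : ℕ)) - f (ctr j fun i => (Q i : ℕ) / 2))]
      simp only [cl, F, cell_half]
    have htel : ∀ x, ∑ j ∈ Finset.range J, (F (j + 1) x - F j x) = F J x - F 0 x := fun x =>
      Finset.sum_range_sub (fun j => F j x) J
    have h0 : F 0 x = F 0 y := by
      have : ∀ t, cell 0 t = 0 := fun t => by have := cell_lt 0 t; omega
      simp only [F, this]
    have hclose : ∀ x : Fin d → ℝ, (∀ i, x i ∈ Set.Icc (0 : ℝ) 1) →
        |f x - F J x| ≤ Real.sqrt d * (1 / 2 / 2 ^ J) := fun x hx =>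
      (hf.abs_le _ _).trans (euclidDist_le _ _ _ (by positivity) fun i => cell_close J (x i) (hx i))
    have e1 := (abs_le.1 (hclose x hx)).2
    have e2 := (abs_le.1 (hclose y hy)).1
    have e3 : Real.sqrt d * (1 / 2 / 2 ^ J) + Real.sqrt d * (1 / 2 / 2 ^ J) = Real.sqrt d / 2 ^ J := by
      ring
    simp only [mul_sub, Finset.sum_sub_distrib] at hlev ⊢
    simp only [mul_sub, Finset.sum_sub_distrib, hlev] at htel ⊢
    have := htel x; have := htel y
    linarith

/-- Indicator of a point, as a real number. -/
def dl (c b : ℕ) : ℝ := if c = b then 1 else 0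

lemma dl_nonneg (c b : ℕ) : 0 ≤ dl c b := by unfold dl; split_ifs <;> norm_num

lemma dl_shift_le (c b K : ℕ) : ∑ i ∈ Finset.range K, dl c (b + i) ≤ 1 := by
  classical
  by_cases h : b ≤ c
  · have : ∀ i, dl c (b + i) = if c - b = i then 1 else 0 := by
      intro i; unfold dl; congr 1; simp only [eq_iff_iff]; omega
    simp_rw [this]
    rw [Finset.sum_ite_eq]; split_ifs <;> norm_num
  · have : ∀ i, dl c (b + i) = 0 := by
      intro i; unfold dl; rw [if_neg]; omega
    simp [this]

lemma sum_dl (N b : ℕ) (hb : b < N) (u : ℕ → ℝ) : ∑ c : Fin N, dl c b * u c = u b := by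
  rw [← Finset.sum_range (fun c => dl c b * u c)]
  simp [dl, hb]

lemma sum_dl_le (N b : ℕ) : ∑ c : Fin N, dl c b ≤ 1 := by
  rw [← Finset.sum_range (fun c => dl c b)]
  simp only [dl]
  rw [Finset.sum_ite_eq']
  split_ifs <;> norm_num

/-- Averaging kernel on blocks of length `2 ^ m`. -/
def rk (m a c : ℕ) : ℝ := 1 / 2 ^ m * ∑ i ∈ Finset.range (2 ^ m), dl c (2 ^ m * (a / 2 ^ m) + i)

/-- Unsigned flow kernel. -/
def kabs (m a c : ℕ) : ℝ := 1 / 2 / 2 ^ m * ∑ i ∈ Finset.range (2 ^ m), ∑ l ∈ Finset.range (2 ^ m),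
  dl c (2 ^ (m + 1) * (a / 2 ^ (m + 1)) + i + l)

/-- Signed flow kernel. -/
def kk (m a c : ℕ) : ℝ := (if (a / 2 ^ m) % 2 = 0 then -1 else 1) * kabs m a c

lemma rk_nonneg (m a c : ℕ) : 0 ≤ rk m a c :=
  mul_nonneg (by positivity) (Finset.sum_nonneg fun _ _ => dl_nonneg _ _)

lemma rk_le (m a c : ℕ) : rk m a c ≤ 1 / 2 ^ m := by
  unfold rk
  exact mul_le_of_le_one_right (by positivity) (dl_shift_le _ _ _)

lemma sum_rk_le (N m a : ℕ) : ∑ c : Fin N, rk m a c ≤ 1 := by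
  unfold rk
  rw [← Finset.mul_sum, Finset.sum_comm]
  calc _ ≤ 1 / 2 ^ m * ∑ i ∈ Finset.range (2 ^ m), (1:ℝ) := by
        gcongr with i _; exact sum_dl_le _ _
    _ = 1 := by simp

lemma kabs_nonneg (m a c : ℕ) : 0 ≤ kabs m a c :=
  mul_nonneg (by positivity) (Finset.sum_nonneg fun _ _ => Finset.sum_nonneg fun _ _ => dl_nonneg _ _)

lemma kabs_le (m a c : ℕ) : kabs m a c ≤ 1 / 2 := by
  unfold kabs
  calc _ ≤ 1 / 2 / 2 ^ m * ∑ i ∈ Finset.range (2 ^ m), (1:ℝ) := by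
        gcongr with i _; exact dl_shift_le _ _ _
    _ = 1 / 2 := by simp

lemma sum_kabs_le (N m a : ℕ) : ∑ c : Fin N, kabs m a c ≤ 1 / 2 * 2 ^ m := by
  unfold kabs
  rw [← Finset.mul_sum, Finset.sum_comm]
  calc _ ≤ 1 / 2 / 2 ^ m * ∑ i ∈ Finset.range (2 ^ m), ∑ l ∈ Finset.range (2 ^ m), (1:ℝ) := by
        gcongr with i _
        rw [Finset.sum_comm]
        gcongr with l _
        exact sum_dl_le _ _
    _ = 1 / 2 * 2 ^ m := by simp; field_simp

lemma abs_kk (m a c : ℕ) : |kk m a c| = kabs m a c := by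
  unfold kk
  rw [abs_mul, abs_of_nonneg (kabs_nonneg m a c)]
  split_ifs <;> simp

lemma block_le (J m a : ℕ) (hm : m ≤ J) (ha : a < 2 ^ J) : 2 ^ m * (a / 2 ^ m) + 2 ^ m ≤ 2 ^ J := by
  obtain ⟨t, rfl⟩ := Nat.exists_eq_add_of_le hm
  rw [pow_add] at ha ⊢
  have : a / 2 ^ m < 2 ^ t := Nat.div_lt_of_lt_mul ha
  calc 2 ^ m * (a / 2 ^ m) + 2 ^ m = 2 ^ m * (a / 2 ^ m + 1) := by ring
    _ ≤ _ := Nat.mul_le_mul_left _ this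

lemma sum_rk (J m a : ℕ) (hm : m ≤ J) (ha : a < 2 ^ J) (u : ℕ → ℝ) :
    ∑ c : Fin (2 ^ J), rk m a c * u c =
      1 / 2 ^ m * ∑ i ∈ Finset.range (2 ^ m), u (2 ^ m * (a / 2 ^ m) + i) := by
  have hb := block_le J m a hm ha
  unfold rk
  simp_rw [mul_assoc, Finset.sum_mul]
  rw [← Finset.mul_sum, Finset.sum_comm]
  congr 1
  refine Finset.sum_congr rfl fun i hi => ?_
  rw [Finset.mem_range] at hi
  exact sum_dl _ _ (by omega) u

lemma sum_kk (J m a : ℕ) (hm : m + 1 ≤ J) (ha : a < 2 ^ J) (u : ℕ → ℝ) :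
    ∑ c : Fin (2 ^ J), kk m a c * (u (c + 1) - u c) =
      ∑ c : Fin (2 ^ J), rk m a c * u c - ∑ c : Fin (2 ^ J), rk (m + 1) a c * u c := by
  have hb := block_le J (m + 1) a hm ha
  rw [sum_rk J m a (by omega) ha, sum_rk J (m + 1) a hm ha]
  have h2 : 2 ^ (m + 1) = 2 ^ m + 2 ^ m := by ring
  have hk : ∑ c : Fin (2 ^ J), kabs m a c * (u (c + 1) - u c) =
      1 / 2 / 2 ^ m * (∑ i ∈ Finset.range (2 ^ m), u (2 ^ (m + 1) * (a / 2 ^ (m + 1)) + 2 ^ m + i)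
        - ∑ i ∈ Finset.range (2 ^ m), u (2 ^ (m + 1) * (a / 2 ^ (m + 1)) + i)) := by
    unfold kabs
    simp_rw [mul_assoc, Finset.sum_mul]
    rw [← Finset.mul_sum, Finset.sum_comm]
    congr 1
    rw [← Finset.sum_sub_distrib]
    refine Finset.sum_congr rfl fun i hi => ?_
    rw [Finset.mem_range] at hi
    rw [Finset.sum_comm]
    have : ∀ l ∈ Finset.range (2 ^ m), ∑ c : Fin (2 ^ J),
        dl c (2 ^ (m + 1) * (a / 2 ^ (m + 1)) + i + l) * (u (c + 1) - u c)
        = u (2 ^ (m + 1) * (a / 2 ^ (m + 1)) + i + (l + 1))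
          - u (2 ^ (m + 1) * (a / 2 ^ (m + 1)) + i + l) := by
      intro l hl
      rw [Finset.mem_range] at hl
      exact sum_dl _ _ (by omega) fun c => u (c + 1) - u c
    rw [Finset.sum_congr rfl this,
      Finset.sum_range_sub (fun l => u (2 ^ (m + 1) * (a / 2 ^ (m + 1)) + i + l))]
    rw [add_zero, add_right_comm]
  have hq : a / 2 ^ (m + 1) = a / 2 ^ m / 2 := by
    rw [Nat.div_div_eq_div_mul, pow_succ]
  unfold kk
  simp_rw [mul_assoc]
  rw [← Finset.mul_sum, hk]
  have hsplit : ∑ i ∈ Finset.range (2 ^ (m + 1)), u (2 ^ (m + 1) * (a / 2 ^ (m + 1)) + i) =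
      ∑ i ∈ Finset.range (2 ^ m), u (2 ^ (m + 1) * (a / 2 ^ (m + 1)) + i) +
      ∑ i ∈ Finset.range (2 ^ m), u (2 ^ (m + 1) * (a / 2 ^ (m + 1)) + 2 ^ m + i) := by
    conv_lhs => rw [show Finset.range (2 ^ (m + 1)) = Finset.range (2 ^ m + 2 ^ m) by rw [h2]]
    rw [Finset.sum_range_add]
    simp only [add_assoc]
  rw [hsplit]
  have hp : (2:ℝ) ^ (m + 1) = 2 * 2 ^ m := by ring
  split_ifs with hpar
  · have e : 2 ^ m * (a / 2 ^ m) = 2 ^ (m + 1) * (a / 2 ^ (m + 1)) := by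
      rw [hq, pow_succ, mul_assoc]; congr 1; omega
    rw [e, hp]; field_simp; ring
  · have e : 2 ^ m * (a / 2 ^ m) = 2 ^ (m + 1) * (a / 2 ^ (m + 1)) + 2 ^ m := by
      have : a / 2 ^ m = 2 * (a / 2 ^ m / 2) + 1 := by omega
      rw [hq, pow_succ, mul_assoc]
      conv_lhs => rw [this]
      ring
    rw [e, hp]; field_simp; ring

lemma energy {E : Type} [Fintype E] (A : ℕ → E → ℝ) (h0 : ∀ m e, 0 ≤ A m e)
    (h1 : ∀ m e, A m e ≤ 1 / 2 / 2 ^ m) (h2 : ∀ m, ∑ e, A m e ≤ 1 / 2 * 2 ^ m) (J : ℕ) :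
    ∑ e, (∑ m ∈ Finset.range J, A m e) ^ 2 ≤ 3 / 4 * J := by
  have hL : ∀ J, ∑ e, ∑ m ∈ Finset.range J, A m e ≤ 1 / 2 * 2 ^ J := by
    intro J
    rw [Finset.sum_comm]
    induction J with
    | zero => simp
    | succ J ih => rw [Finset.sum_range_succ, pow_succ]; linarith [h2 J]
  induction J with
  | zero => simp
  | succ J ih =>
    have hp : (0:ℝ) < 2 ^ J := by positivity
    have hb : ∀ e, (∑ m ∈ Finset.range (J + 1), A m e) ^ 2 ≤ (∑ m ∈ Finset.range J, A m e) ^ 2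
        + (1 / 2 / 2 ^ J) * (2 * ∑ m ∈ Finset.range J, A m e + A J e) := by
      intro e
      rw [Finset.sum_range_succ]
      have : 0 ≤ 2 * ∑ m ∈ Finset.range J, A m e + A J e :=
        add_nonneg (mul_nonneg (by norm_num) (Finset.sum_nonneg fun _ _ => h0 _ _)) (h0 _ _)
      nlinarith [mul_le_mul_of_nonneg_right (h1 J e) this]
    refine (Finset.sum_le_sum fun e _ => hb e).trans ?_
    rw [Finset.sum_add_distrib, ← Finset.mul_sum, Finset.sum_add_distrib, ← Finset.mul_sum]
    have : 1 / 2 / 2 ^ J * (2 * ∑ e, ∑ m ∈ Finset.range J, A m e + ∑ e, A J e) ≤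
        1 / 2 / 2 ^ J * (2 * (1 / 2 * 2 ^ J) + 1 / 2 * 2 ^ J) := by
      gcongr
      · exact hL J
      · exact h2 J
    have e2 : 1 / 2 / 2 ^ J * (2 * (1 / 2 * 2 ^ J) + 1 / 2 * 2 ^ J) = (3 / 4 : ℝ) := by
      field_simp; norm_num
    push_cast; linarith

/-- The flow potentials; `g = 0` horizontal, otherwise vertical. -/
def flow (J g : ℕ) (e : Fin (2 ^ J) × Fin (2 ^ J)) (x : Fin 2 → ℝ) : ℝ :=
  ∑ m ∈ Finset.range J, if g = 0 then kk m (cell J (x 0)) e.1 * rk m (cell J (x 1)) e.2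
    else rk (m + 1) (cell J (x 0)) e.1 * kk m (cell J (x 1)) e.2

lemma measurable_flow (J g : ℕ) (e : Fin (2 ^ J) × Fin (2 ^ J)) : Measurable (flow J g e) := by
  have h : ∀ (F : ℕ → ℝ) (i : Fin 2), Measurable fun x : Fin 2 → ℝ => F (cell J (x i)) := by
    intro F i
    exact (Measurable.of_discrete (f := F)).comp ((measurable_cell J).comp (measurable_pi_apply i))
  unfold flow
  refine Finset.measurable_fun_sum _ fun m _ => ?_
  split_ifs
  · exact (h (fun a => kk m a e.1) 0).mul (h (fun a => rk m a e.2) 1)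
  · exact (h (fun a => rk (m + 1) a e.1) 0).mul (h (fun a => kk m a e.2) 1)

lemma flow_energy (J g : ℕ) (x : Fin 2 → ℝ) : ∑ e, (flow J g e x) ^ 2 ≤ 3 / 4 * J := by
  let A : ℕ → Fin (2 ^ J) × Fin (2 ^ J) → ℝ := fun m e =>
    if g = 0 then kabs m (cell J (x 0)) e.1 * rk m (cell J (x 1)) e.2
    else rk (m + 1) (cell J (x 0)) e.1 * kabs m (cell J (x 1)) e.2
  have hA : ∀ e, (flow J g e x) ^ 2 ≤ (∑ m ∈ Finset.range J, A m e) ^ 2 := by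
    intro e
    rw [sq_le_sq]
    refine le_trans ?_ (le_abs_self _)
    refine (Finset.abs_sum_le_sum_abs _ _).trans (Finset.sum_le_sum fun m _ => le_of_eq ?_)
    simp only [A]
    split_ifs <;> rw [abs_mul, abs_kk, abs_of_nonneg (rk_nonneg _ _ _)]
  refine (Finset.sum_le_sum fun e _ => hA e).trans (energy A ?_ ?_ ?_ J)
  · intro m e
    simp only [A]
    split_ifs
    · exact mul_nonneg (kabs_nonneg _ _ _) (rk_nonneg _ _ _)
    · exact mul_nonneg (rk_nonneg _ _ _) (kabs_nonneg _ _ _)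
  · intro m e
    simp only [A]
    split_ifs
    · calc _ ≤ (1 / 2 : ℝ) * (1 / 2 ^ m) :=
            mul_le_mul (kabs_le _ _ _) (rk_le _ _ _) (rk_nonneg _ _ _) (by norm_num)
        _ = _ := by ring
    · calc _ ≤ (1 / 2 ^ (m + 1)) * (1 / 2 : ℝ) :=
            mul_le_mul (rk_le _ _ _) (kabs_le _ _ _) (kabs_nonneg _ _ _) (by positivity)
        _ ≤ (1 / 2 ^ m) * (1 / 2 : ℝ) := by
            gcongr
            · norm_num
            · omega
        _ = _ := by ring
  · intro m
    simp only [A]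
    split_ifs
    · rw [Fintype.sum_prod_type]
      dsimp only
      rw [← Finset.sum_mul_sum]
      calc _ ≤ (1 / 2 * 2 ^ m : ℝ) * 1 :=
            mul_le_mul (sum_kabs_le _ _ _) (sum_rk_le _ _ _)
              (Finset.sum_nonneg fun _ _ => rk_nonneg _ _ _) (by positivity)
        _ = _ := by ring
    · rw [Fintype.sum_prod_type]
      dsimp only
      rw [← Finset.sum_mul_sum]
      calc _ ≤ 1 * (1 / 2 * 2 ^ m : ℝ) :=
            mul_le_mul (sum_rk_le _ _ _) (sum_kabs_le _ _ _)
              (Finset.sum_nonneg fun _ _ => kabs_nonneg _ _ _) (by positivity)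
        _ = _ := by ring

lemma flow_identity (J : ℕ) (G : ℕ → ℕ → ℝ) (x : Fin 2 → ℝ) :
    ∑ e : Fin (2 ^ J) × Fin (2 ^ J), (G (e.1 + 1) e.2 - G e.1 e.2) * flow J 0 e x +
    ∑ e : Fin (2 ^ J) × Fin (2 ^ J), (G e.1 (e.2 + 1) - G e.1 e.2) * flow J 1 e x =
    G (cell J (x 0)) (cell J (x 1)) -
      ∑ c : Fin (2 ^ J), ∑ b : Fin (2 ^ J), rk J 0 c * (rk J 0 b * G c b) := by
  set a := cell J (x 0) with ha'
  set b := cell J (x 1) with hb'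
  have ha : a < 2 ^ J := cell_lt _ _
  have hb : b < 2 ^ J := cell_lt _ _
  let A : ℕ → ℝ := fun m => ∑ c : Fin (2 ^ J), ∑ c' : Fin (2 ^ J), rk m a c * (rk m b c' * G c c')
  have hAJ : A J = ∑ c : Fin (2 ^ J), ∑ b : Fin (2 ^ J), rk J 0 c * (rk J 0 b * G c b) := by
    have h : ∀ a < 2 ^ J, ∀ c, rk J a c = rk J 0 c := by
      intro a ha c
      unfold rk; rw [Nat.div_eq_of_lt ha, Nat.zero_div]
    simp only [A, h a ha, h b hb]
  have hA0 : A 0 = G a b := by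
    simp only [A, ← Finset.mul_sum]
    have h1 := sum_rk J 0 a (by omega) ha fun c => ∑ c' : Fin (2 ^ J), rk 0 b c' * G c c'
    have h2 := sum_rk J 0 b (by omega) hb fun c' => G a c'
    rw [h1]; simpa using h2
  have hlev : ∀ m, m + 1 ≤ J →
      ∑ e : Fin (2 ^ J) × Fin (2 ^ J), (G (e.1 + 1) e.2 - G e.1 e.2) * (kk m a e.1 * rk m b e.2) +
      ∑ e : Fin (2 ^ J) × Fin (2 ^ J), (G e.1 (e.2 + 1) - G e.1 e.2) * (rk (m + 1) a e.1 * kk m b e.2)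
      = A m - A (m + 1) := by
    intro m hm
    have h1 : ∑ e : Fin (2 ^ J) × Fin (2 ^ J),
        (G (e.1 + 1) e.2 - G e.1 e.2) * (kk m a e.1 * rk m b e.2)
        = A m - ∑ c : Fin (2 ^ J), ∑ c' : Fin (2 ^ J), rk (m + 1) a c * (rk m b c' * G c c') := by
      rw [Fintype.sum_prod_type, Finset.sum_comm]
      simp only [A]
      rw [Finset.sum_comm (f := fun c c' : Fin (2 ^ J) => rk m a c * (rk m b c' * G c c')),
        Finset.sum_comm (f := fun c c' : Fin (2 ^ J) => rk (m + 1) a c * (rk m b c' * G c c')),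
        ← Finset.sum_sub_distrib]
      refine Finset.sum_congr rfl fun c' _ => ?_
      have := congrArg (fun t => rk m b c' * t) (sum_kk J m a hm ha fun c => G c c')
      simp only [mul_sub, Finset.mul_sum] at this
      refine Eq.trans (Finset.sum_congr rfl fun c _ => ?_) (this.trans (congrArg₂ (· - ·)
        (Finset.sum_congr rfl fun c _ => ?_) (Finset.sum_congr rfl fun c _ => ?_))) <;> ring
    have h2 : ∑ e : Fin (2 ^ J) × Fin (2 ^ J),
        (G e.1 (e.2 + 1) - G e.1 e.2) * (rk (m + 1) a e.1 * kk m b e.2)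
        = ∑ c : Fin (2 ^ J), ∑ c' : Fin (2 ^ J), rk (m + 1) a c * (rk m b c' * G c c')
          - A (m + 1) := by
      rw [Fintype.sum_prod_type]
      simp only [A]
      rw [← Finset.sum_sub_distrib]
      refine Finset.sum_congr rfl fun c _ => ?_
      have := congrArg (fun t => rk (m + 1) a c * t) (sum_kk J m b hm hb fun c' => G c c')
      simp only [mul_sub, Finset.mul_sum] at this
      refine Eq.trans (Finset.sum_congr rfl fun c' _ => ?_) (this.trans (congrArg₂ (· - ·)
        (Finset.sum_congr rfl fun c' _ => ?_) (Finset.sum_congr rfl fun c' _ => ?_))) <;> ring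
    rw [h1, h2]; ring
  rw [← hAJ, ← hA0]
  have htel := Finset.sum_range_sub' A J
  rw [← htel]
  simp only [flow, if_true, one_ne_zero, if_false, Finset.mul_sum]
  rw [Finset.sum_comm, Finset.sum_comm (s := Finset.univ) (t := Finset.range J),
    ← Finset.sum_add_distrib]
  refine Finset.sum_congr rfl fun m hm => ?_
  exact hlev m (Finset.mem_range.1 hm)

lemma planar_bound {n : ℕ} (hn : 0 < n)
    {Ω : Type*} [MeasurableSpace Ω] (P : Measure Ω) [IsProbabilityMeasure P]
    (X Y : Fin n → Ω → (Fin 2 → ℝ))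
    (hXmeas : ∀ k, Measurable (X k)) (hYmeas : ∀ k, Measurable (Y k))
    (hXcube : ∀ k ω i, X k ω i ∈ Set.Icc (0 : ℝ) 1)
    (hYcube : ∀ k ω i, Y k ω i ∈ Set.Icc (0 : ℝ) 1)
    (hpair : ∀ j k, j ≠ k →
      IndepFun (fun ω => (X j ω, Y j ω)) (fun ω => (X k ω, Y k ω)) P)
    (hid : ∀ k, P.map (X k) = P.map (Y k)) (J : ℕ) :
    ∫⁻ ω, W1 (empMeasure X ω) (empMeasure Y ω) ∂P ≤ ENNReal.ofReal
      (Real.sqrt (2:ℕ) / 2 ^ J + 2 * ((1 / 2 ^ J) *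
        Real.sqrt ((2 ^ J * 2 ^ J) * (3 * J) / n))) := by
  have hsq : ∀ g e x, flow J g e x ^ 2 ≤ 3 / 4 * J := fun g e x =>
    (Finset.single_le_sum (f := fun e => flow J g e x ^ 2) (fun _ _ => sq_nonneg _)
      (Finset.mem_univ e)).trans (flow_energy J g x)
  have key := master hn P X Y hXmeas hYmeas hXcube hYcube hpair hid 2
    (fun _ => Fin (2 ^ J) × Fin (2 ^ J)) (flow J) (measurable_flow J)
    (fun _ => 1 + 3 / 4 * J) (fun g e x => by
      have := hsq g e x
      rw [abs_le]; constructor <;> nlinarith [sq_nonneg (flow J g e x + 1), sq_nonneg (flow J g e x - 1)])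
    (fun _ => 3 * J) (fun g x y => by
      have h1 := flow_energy J g x
      have h2 := flow_energy J g y
      calc _ ≤ ∑ e, (2 * flow J g e x ^ 2 + 2 * flow J g e y ^ 2) :=
            Finset.sum_le_sum fun e _ => by nlinarith [sq_nonneg (flow J g e x + flow J g e y)]
        _ ≤ 3 * (J : ℝ) := by
            rw [Finset.sum_add_distrib, ← Finset.mul_sum, ← Finset.mul_sum]; linarith)
    (fun _ => 1 / 2 ^ J) (fun _ => by positivity)
    (Real.sqrt (2:ℕ) / 2 ^ J) (by positivity) ?_
  · simpa [Finset.sum_range_succ, two_mul] using key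
  intro f hf
  let G : ℕ → ℕ → ℝ := fun a b => f (ctr J ![a, b])
  refine ⟨fun g e => if g = 0 then G (e.1 + 1) e.2 - G e.1 e.2 else G e.1 (e.2 + 1) - G e.1 e.2,
    ?_, ?_⟩
  · have hp : (0:ℝ) < 2 ^ J := by positivity
    have hG1 : ∀ a b, |G (a + 1) b - G a b| ≤ 1 / 2 ^ J := by
      intro a b
      refine (hf.abs_le _ _).trans (le_of_eq ?_)
      unfold euclidDist
      rw [Fin.sum_univ_two]
      have : ((a + 1 : ℕ) + 1 / 2) / 2 ^ J - ((a : ℝ) + 1 / 2) / 2 ^ J = 1 / 2 ^ J := by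
        push_cast; ring
      simp only [ctr, Matrix.cons_val_zero, Matrix.cons_val_one, this, sub_self]
      rw [zero_pow two_ne_zero, add_zero, Real.sqrt_sq (by positivity)]
    have hG2 : ∀ a b, |G a (b + 1) - G a b| ≤ 1 / 2 ^ J := by
      intro a b
      refine (hf.abs_le _ _).trans (le_of_eq ?_)
      unfold euclidDist
      rw [Fin.sum_univ_two]
      have : ((b + 1 : ℕ) + 1 / 2) / 2 ^ J - ((b : ℝ) + 1 / 2) / 2 ^ J = 1 / 2 ^ J := by
        push_cast; ring
      simp only [ctr, Matrix.cons_val_zero, Matrix.cons_val_one, this, sub_self]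
      rw [zero_pow two_ne_zero, zero_add, Real.sqrt_sq (by positivity)]
    intro g e
    dsimp only
    split_ifs
    · exact hG1 _ _
    · exact hG2 _ _
  · intro x y hx hy
    have hclose : ∀ x : Fin 2 → ℝ, (∀ i, x i ∈ Set.Icc (0 : ℝ) 1) →
        |f x - G (cell J (x 0)) (cell J (x 1))| ≤ Real.sqrt (2:ℕ) * (1 / 2 / 2 ^ J) := by
      intro x hx
      refine (hf.abs_le _ _).trans (euclidDist_le _ _ _ (by positivity) fun i => ?_)
      fin_cases i
      · exact cell_close J (x 0) (hx 0)
      · exact cell_close J (x 1) (hx 1)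
    have e1 := (abs_le.1 (hclose x hx)).2
    have e2 := (abs_le.1 (hclose y hy)).1
    have e3 : Real.sqrt (2:ℕ) * (1 / 2 / 2 ^ J) + Real.sqrt (2:ℕ) * (1 / 2 / 2 ^ J)
      = Real.sqrt (2:ℕ) / 2 ^ J := by ring
    have i1 := flow_identity J G x
    have i2 := flow_identity J G y
    simp only [Finset.sum_range_succ, Finset.sum_range_zero, zero_add, if_true, one_ne_zero,
      if_false]
    simp only [mul_sub (_ - _), Finset.sum_sub_distrib]
    linarith

lemma num1 (n : ℕ) (hn : 2 ≤ n) : ∃ J : ℕ, (Real.sqrt (1:ℕ) / 2 ^ J + ∑ j ∈ Finset.range J,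
        Real.sqrt (1:ℕ) * (1 / 2 / 2 ^ (j + 1)) * Real.sqrt ((2 ^ (j + 1)) ^ 1 * 2 / n))
        ≤ 2 / Real.sqrt n := by
  have hn' : (0:ℝ) < n := by positivity
  have hs : 0 < Real.sqrt n := Real.sqrt_pos.2 hn'
  obtain ⟨J, hJ⟩ := exists_pow_lt_of_lt_one (by positivity : 0 < (1/4) / Real.sqrt n)
    (by norm_num : (1/2 : ℝ) < 1)
  refine ⟨J, ?_⟩
  set s := Real.sqrt 2 with hsd
  have hs2 : s ^ 2 = 2 := Real.sq_sqrt (by norm_num)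
  have hspos : 0 < s := by positivity
  have hs0 : 1.414 < s := by
    rw [hsd]; exact Real.lt_sqrt_of_sq_lt (by norm_num)
  have hs1 : s < 1.415 := by
    rw [hsd, Real.sqrt_lt' (by norm_num)]; norm_num
  have hterm : ∀ j : ℕ, Real.sqrt (1:ℕ) * (1 / 2 / 2 ^ (j + 1)) *
      Real.sqrt ((2 ^ (j + 1)) ^ 1 * 2 / n) = (1 / 2 / Real.sqrt n) * (s / 2) ^ j := by
    intro j
    have h1 : ((2:ℝ) ^ (j + 1)) ^ 1 * 2 = (s ^ (j + 2)) ^ 2 := by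
      rw [pow_one, pow_right_comm, hs2]; ring
    rw [Real.sqrt_div (by positivity), h1, Real.sqrt_sq (by positivity), div_pow]
    simp only [Nat.cast_one, Real.sqrt_one, one_mul]
    rw [pow_add s, hs2]; field_simp; ring
  rw [Finset.sum_congr rfl fun j _ => hterm j, ← Finset.mul_sum]
  have hgeo : ∑ j ∈ Finset.range J, (s / 2) ^ j ≤ 3.5 := by
    have h := geom_sum_eq (by linarith : s / 2 ≠ 1) J
    rw [h, ← neg_div_neg_eq, div_le_iff₀ (by linarith)]
    have : 0 < (s / 2) ^ J := by positivity
    linarith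
  have e1 : Real.sqrt (1:ℕ) / 2 ^ J ≤ (1/4) / Real.sqrt n := by
    simp only [Nat.cast_one, Real.sqrt_one]
    rw [← one_div_pow]; exact hJ.le
  calc _ ≤ (1/4) / Real.sqrt n + (1 / 2 / Real.sqrt n) * 3.5 := by gcongr
    _ = 2 / Real.sqrt n := by ring

lemma num3 (d n : ℕ) (hd : 3 ≤ d) (hn : 2 ≤ n) : ∃ J : ℕ,
    (Real.sqrt d / 2 ^ J + ∑ j ∈ Finset.range J,
        Real.sqrt d * (1 / 2 / 2 ^ (j + 1)) * Real.sqrt ((2 ^ (j + 1)) ^ d * 2 / n))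
        ≤ 16 * Real.sqrt d / (n : ℝ) ^ (1 / d : ℝ) := by
  have hn' : (0:ℝ) < n := by positivity
  let J := Nat.log (2 ^ d) n
  have hb : 1 < 2 ^ d := Nat.one_lt_two_pow (by omega)
  have hJ1 : ((2:ℝ) ^ J) ^ d ≤ n := by
    have := Nat.pow_log_le_self (2 ^ d) (by omega : n ≠ 0)
    rw [← pow_mul, mul_comm, pow_mul]; exact_mod_cast this
  have hJ2 : (n : ℝ) ≤ ((2:ℝ) ^ (J + 1)) ^ d := by
    have := (Nat.lt_pow_succ_log_self hb n).le
    rw [← pow_mul, mul_comm, pow_mul]; exact_mod_cast this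
  refine ⟨J, ?_⟩
  have hroot : (n : ℝ) ^ (1 / d : ℝ) ≤ 2 ^ (J + 1) := by
    calc (n : ℝ) ^ (1 / d : ℝ) ≤ (((2:ℝ) ^ (J + 1)) ^ d) ^ (1 / d : ℝ) :=
          Real.rpow_le_rpow hn'.le hJ2 (by positivity)
      _ = _ := by rw [one_div, Real.pow_rpow_inv_natCast (by positivity) (by omega)]
  have hrpos : 0 < (n : ℝ) ^ (1 / d : ℝ) := by positivity
  let τ : ℕ → ℝ := fun j => (1 / 2 / 2 ^ j) * Real.sqrt ((2 ^ j) ^ d * 2 / n)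
  have hτ0 : ∀ j, 0 ≤ τ j := fun j => by positivity
  have hτ : ∀ j, 4 * τ j ≤ 3 * τ (j + 1) := by
    intro j
    have h1 : Real.sqrt 8 * Real.sqrt ((2 ^ j) ^ d * 2 / n) ≤ Real.sqrt ((2 ^ (j + 1)) ^ d * 2 / n) := by
      rw [← Real.sqrt_mul (by norm_num)]
      apply Real.sqrt_le_sqrt
      have : (8:ℝ) ≤ 2 ^ d := by
        calc (8:ℝ) = 2 ^ 3 := by norm_num
          _ ≤ _ := pow_le_pow_right₀ (by norm_num) hd
      rw [pow_succ, mul_pow, mul_div_assoc, mul_div_assoc]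
      have h2 : 0 ≤ ((2:ℝ) ^ j) ^ d * (2 / n) := by positivity
      nlinarith
    have h8 : 8 / 3 ≤ Real.sqrt 8 := Real.le_sqrt_of_sq_le (by norm_num)
    have h2 : 8 / 3 * Real.sqrt ((2 ^ j) ^ d * 2 / n) ≤ Real.sqrt ((2 ^ (j + 1)) ^ d * 2 / n) :=
      (mul_le_mul_of_nonneg_right h8 (Real.sqrt_nonneg _)).trans h1
    have h3 : (1 / 2 / (2:ℝ) ^ j) = 2 * (1 / 2 / 2 ^ (j + 1)) := by rw [pow_succ]; field_simp
    simp only [τ]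
    rw [h3]
    have h4 : (0:ℝ) ≤ 1 / 2 / 2 ^ (j + 1) := by positivity
    nlinarith [mul_le_mul_of_nonneg_left h2 h4]
  have hsum : ∀ K, ∑ j ∈ Finset.range K, τ (j + 1) ≤ 4 * τ K := by
    intro K
    induction K with
    | zero => simpa using hτ0 0
    | succ K ih => rw [Finset.sum_range_succ]; linarith [hτ K]
  have hτJ : τ J ≤ 1 / 2 ^ J := by
    have : Real.sqrt ((2 ^ J) ^ d * 2 / n) ≤ 2 := by
      rw [Real.sqrt_le_left (by norm_num), div_le_iff₀ hn']; linarith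
    calc τ J ≤ (1 / 2 / 2 ^ J) * 2 := by simp only [τ]; gcongr
      _ = _ := by ring
  have hfin : 1 / (2:ℝ) ^ J ≤ 2 / (n : ℝ) ^ (1 / d : ℝ) := by
    rw [div_le_div_iff₀ (by positivity) hrpos]
    rw [pow_succ] at hroot; linarith
  calc _ = Real.sqrt d * (1 / 2 ^ J + ∑ j ∈ Finset.range J, τ (j + 1)) := by
        rw [mul_add, Finset.mul_sum, mul_one_div]; simp only [τ, mul_assoc]
    _ ≤ Real.sqrt d * (8 * (2 / (n : ℝ) ^ (1 / d : ℝ))) := by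
        gcongr
        have := hsum J
        have : 0 ≤ 2 / (n : ℝ) ^ (1 / d : ℝ) := by positivity
        linarith
    _ = _ := by ring

lemma num2 (n : ℕ) (hn : 2 ≤ n) : ∃ J : ℕ,
    Real.sqrt (2:ℕ) / 2 ^ J + 2 * ((1 / 2 ^ J) * Real.sqrt ((2 ^ J * 2 ^ J) * (3 * J) / n))
      ≤ 10 * Real.sqrt ((1 + Real.log n) / n) := by
  have hn' : (0:ℝ) < n := by positivity
  let J := Nat.log 4 n
  have hJ1 : (4:ℝ) ^ J ≤ n := by
    exact_mod_cast Nat.pow_log_le_self 4 (by omega : n ≠ 0)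
  have hJ2 : (n : ℝ) ≤ 4 ^ (J + 1) := by
    exact_mod_cast (Nat.lt_pow_succ_log_self (by norm_num : 1 < 4) n).le
  refine ⟨J, ?_⟩
  have h4 : ∀ k : ℕ, (4:ℝ) ^ k = (2 ^ k) ^ 2 := fun k => by
    rw [← pow_mul, mul_comm, pow_mul]; norm_num
  have hl : 0 ≤ Real.log n := Real.log_natCast_nonneg n
  have hJl : (J : ℝ) ≤ Real.log n := by
    have h := Real.log_le_log (by positivity) hJ1
    rw [Real.log_pow] at h
    have h5 : 1 ≤ Real.log 4 := by
      rw [show (4:ℝ) = 2 ^ 2 by norm_num, Real.log_pow]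
      have := Real.log_two_gt_d9; push_cast; linarith
    have : (0:ℝ) ≤ J := by positivity
    nlinarith
  have hs : 0 < Real.sqrt n := Real.sqrt_pos.2 hn'
  have hA : Real.sqrt (2:ℕ) / 2 ^ J ≤ 3 * Real.sqrt ((1 + Real.log n) / n) := by
    have h1 : Real.sqrt n ≤ 2 ^ (J + 1) := by
      rw [Real.sqrt_le_left (by positivity), ← h4]; exact hJ2
    have h2 : Real.sqrt (2:ℕ) ≤ 1.5 := by
      rw [Real.sqrt_le_left (by norm_num)]; norm_num
    have h3 : 1 / Real.sqrt n ≤ Real.sqrt ((1 + Real.log n) / n) := by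
      rw [Real.sqrt_div (by linarith)]
      gcongr
      exact Real.one_le_sqrt.2 (by linarith)
    calc _ ≤ 1.5 / 2 ^ J := by gcongr
      _ ≤ 3 * (1 / Real.sqrt n) := by
          rw [mul_one_div, div_le_div_iff₀ (by positivity) hs]
          rw [pow_succ] at h1; linarith
      _ ≤ _ := by gcongr
  have hB : 2 * ((1 / 2 ^ J) * Real.sqrt ((2 ^ J * 2 ^ J) * (3 * J) / n))
      ≤ 4 * Real.sqrt ((1 + Real.log n) / n) := by
    have e1 : Real.sqrt ((2 ^ J * 2 ^ J) * (3 * J) / n) = 2 ^ J * Real.sqrt (3 * J / n) := by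
      rw [mul_div_assoc, Real.sqrt_mul (by positivity), Real.sqrt_mul_self (by positivity)]
    have e2 : Real.sqrt (3 * J / n) ≤ 2 * Real.sqrt ((1 + Real.log n) / n) := by
      rw [Real.sqrt_le_left (by positivity), mul_pow, Real.sq_sqrt (by positivity), ← mul_div_assoc]
      gcongr <;> linarith
    rw [e1, ← mul_assoc (1 / 2 ^ J), one_div_mul_cancel (by positivity), one_mul]
    linarith
  have : 0 ≤ Real.sqrt ((1 + Real.log n) / n) := Real.sqrt_nonneg _
  linarith

/-- Quantitative form of Theorem 3, with explicit constants. -/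
theorem expected_W1_rate_quantitative {d n : ℕ} (hn : 2 ≤ n)
    (Ω : Type*) [MeasurableSpace Ω] (P : Measure Ω) [IsProbabilityMeasure P]
    (X Y : Fin n → Ω → (Fin d → ℝ))
    (hXmeas : ∀ k, Measurable (X k)) (hYmeas : ∀ k, Measurable (Y k))
    (hXcube : ∀ k ω i, X k ω i ∈ Set.Icc (0 : ℝ) 1)
    (hYcube : ∀ k ω i, Y k ω i ∈ Set.Icc (0 : ℝ) 1)
    (hpair : ∀ j k, j ≠ k →
      IndepFun (fun ω => (X j ω, Y j ω)) (fun ω => (X k ω, Y k ω)) P)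
    (hid : ∀ k, P.map (X k) = P.map (Y k)) :
    (d = 1 →
      ∫⁻ ω, W1 (empMeasure X ω) (empMeasure Y ω) ∂P
        ≤ ENNReal.ofReal (2 / Real.sqrt n)) ∧
    (d = 2 →
      ∫⁻ ω, W1 (empMeasure X ω) (empMeasure Y ω) ∂P
        ≤ ENNReal.ofReal (10 * Real.sqrt ((1 + Real.log n) / n))) ∧
    (3 ≤ d →
      ∫⁻ ω, W1 (empMeasure X ω) (empMeasure Y ω) ∂P
        ≤ ENNReal.ofReal (16 * Real.sqrt d / (n : ℝ) ^ (1 / d : ℝ))) := by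
  refine ⟨?_, ?_, ?_⟩
  · intro hd
    subst hd
    obtain ⟨J, hJ⟩ := num1 n hn
    exact (dyadic_bound (by omega) P X Y hXmeas hYmeas hXcube hYcube hpair hid J).trans
      (ENNReal.ofReal_le_ofReal hJ)
  · intro hd
    subst hd
    obtain ⟨J, hJ⟩ := num2 n hn
    exact (planar_bound (by omega) P X Y hXmeas hYmeas hXcube hYcube hpair hid J).trans
      (ENNReal.ofReal_le_ofReal hJ)
  · intro hd
    obtain ⟨J, hJ⟩ := num3 d n hd hn
    exact (dyadic_bound (by omega) P X Y hXmeas hYmeas hXcube hYcube hpair hid J).trans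
      (ENNReal.ofReal_le_ofReal hJ)
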